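/- Let p be an odd prime and n ≥ 1. Every finite sequence (multiset) of elements of 𝔽_p^n whose length is at least (p − 1) · 2^p · C_p^n, where C_p = inf_{0<x<1} ((1 − x^p)/(1 − x)) · x^{−(p−1)/3}, contains a zero-sum subsequence of length p; that is, it has a sub-multiset of cardinality p whose sum is 0. Equivalently, the Erdős–Ginzburg–Ziv constant satisfies 𝔰(𝔽_p^n) ≤ (p − 1) · 2^p · C_p^n. -/

import Mathlib

/-- The Erdős–Ginzburg–Ziv constant of an abelian group `G`: the smallest `k` such that
every multiset of elements of `G` of cardinality `k` contains a sub-multiset of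
cardinality `exp(G)` summing to zero. -/
noncomputable def EGZ (G : Type*) [AddCommMonoid G] : ℕ :=
  sInf {k | ∀ S : Multiset G, Multiset.card S = k →
    ∃ T ≤ S, Multiset.card T = AddMonoid.exponent G ∧ T.sum = 0}

/-- The Ellenberg–Gijswijt constant `C_p = inf_{0<x<1} ((1-x^p)/(1-x)) x^{-(p-1)/3}`. -/
noncomputable def EGconst (p : ℕ) : ℝ :=
  sInf {y : ℝ | ∃ x : ℝ, 0 < x ∧ x < 1 ∧
    y = (1 - x ^ p) / (1 - x) * x ^ (-(((p : ℝ) - 1) / 3))}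


open Finset

/-- A function on `X^ι` of partition rank at most one. -/
def Red {K X ι : Type*} [Field K] (F : (ι → X) → K) : Prop :=
  ∃ (B : Set ι) (f g : (ι → X) → K), B.Nonempty ∧ Bᶜ.Nonempty ∧
    DependsOn f B ∧ DependsOn g Bᶜ ∧ ∀ x, F x = f x * g x

theorem Red.zero_mem {K X : Type*} [Field K] {k : ℕ} {F : (Fin (k+1) → X) → K} (h : Red F) :
    ∃ (B : Set (Fin (k+1))) (f g : (Fin (k+1) → X) → K), 0 ∈ B ∧ Bᶜ.Nonempty ∧
    DependsOn f B ∧ DependsOn g Bᶜ ∧ ∀ x, F x = f x * g x := by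
  obtain ⟨B, f, g, h1, h2, h3, h4, h5⟩ := h
  by_cases h0 : (0 : Fin (k+1)) ∈ B
  · exact ⟨B, f, g, h0, h2, h3, h4, h5⟩
  · refine ⟨Bᶜ, g, f, h0, ?_, h4, ?_, fun x => by rw [h5, mul_comm]⟩
    · simpa using h1
    · simpa using h3

theorem Red.slice_or {K X : Type*} [Field K] [Fintype X] [Nonempty X] {k : ℕ}
    {F : (Fin (k+1) → X) → K} (hF : Red F) :
    (∃ u : X → K, ∀ h : X → K, ∑ a, h a * u a = 0 →
      ∀ x : Fin k → X, ∑ a, h a * F (Fin.cons a x) = 0) ∨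
    (∀ h : X → K, Red (fun x : Fin k → X => ∑ a, h a * F (Fin.cons a x))) := by
  obtain ⟨B, f, g, h0, h2, h3, h4, h5⟩ := hF.zero_mem
  obtain ⟨a0⟩ := ‹Nonempty X›
  have hg : ∀ (x : Fin k → X) a, g (Fin.cons a x) = g (Fin.cons a0 x) := by
    intro x a
    apply h4
    intro i hi
    induction i using Fin.cases with
    | zero => exact absurd h0 hi
    | succ i => simp
  by_cases hB : ∃ i : Fin k, i.succ ∈ B
  · right
    intro h
    refine ⟨{i | i.succ ∈ B}, fun x => ∑ a, h a * f (Fin.cons a x), fun x => g (Fin.cons a0 x),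
      hB, ?_, ?_, ?_, ?_⟩
    · obtain ⟨j, hj⟩ := h2
      induction j using Fin.cases with
      | zero => exact absurd h0 hj
      | succ i => exact ⟨i, hj⟩
    · intro x y hxy
      refine Finset.sum_congr rfl fun a _ => ?_
      congr 1
      apply h3
      intro i hi
      induction i using Fin.cases with
      | zero => simp
      | succ i => simpa using hxy i hi
    · intro x y hxy
      apply h4
      intro i hi
      induction i using Fin.cases with
      | zero => simp
      | succ i => simpa using hxy i hi
    · intro x
      rw [Finset.sum_mul]
      refine Finset.sum_congr rfl fun a _ => ?_
      rw [h5, hg, mul_assoc]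
  · left
    push Not at hB
    refine ⟨fun a => f (fun _ => a), fun h hh x => ?_⟩
    have : ∀ a, h a * F (Fin.cons a x) = (h a * f (fun _ => a)) * g (Fin.cons a0 x) := by
      intro a
      rw [h5, hg, mul_assoc]
      congr 2
      apply h3
      intro i hi
      induction i using Fin.cases with
      | zero => simp
      | succ i => exact absurd hi (hB i)
    rw [Finset.sum_congr rfl fun a _ => this a, ← Finset.sum_mul, hh, zero_mul]

theorem exists_annihilator {K X τ : Type*} [Field K] [Fintype X] [DecidableEq X] [DecidableEq K]
    (S : Finset X) (T : Finset τ) (u : τ → X → K) :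
    ∃ h : X → K, (∀ t ∈ T, ∑ a, h a * u t a = 0) ∧ #S ≤ #{a ∈ S | h a ≠ 0} + #T := by
  have key : ∀ j : ℕ, j + #T ≤ #S →
      ∃ h : X → K, (∀ t ∈ T, ∑ a, h a * u t a = 0) ∧ j ≤ #{a ∈ S | h a ≠ 0} := by
    intro j
    induction j with
    | zero => intro _; exact ⟨0, by simp, by simp⟩
    | succ j ih =>
      intro hj
      obtain ⟨h, h1, h2⟩ := ih (by omega)
      by_cases h3 : j + 1 ≤ #{a ∈ S | h a ≠ 0}
      · exact ⟨h, h1, h3⟩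
      have hcard := Finset.card_filter_add_card_filter_not (s := S) (fun a => h a ≠ 0)
      set Z : Finset X := {a ∈ S | ¬ h a ≠ 0} with hZ
      let L : (Z → K) →ₗ[K] (T → K) :=
        { toFun := fun w t => ∑ a : Z, w a * u t a
          map_add' := by
            intro v w; ext t; simp [add_mul, Finset.sum_add_distrib]
          map_smul' := by
            intro r w; ext t; simp [Finset.mul_sum, mul_assoc] }
      have hker : LinearMap.ker L ≠ ⊥ := by
        apply LinearMap.ker_ne_bot_of_finrank_lt
        simp only [Module.finrank_fintype_fun_eq_card, Fintype.card_coe]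
        omega
      obtain ⟨w, hw, hw0⟩ := (Submodule.ne_bot_iff _).1 hker
      have hwL : ∀ t ∈ T, ∑ a : Z, w a * u t a = 0 := fun t ht =>
        congrFun (LinearMap.mem_ker.1 hw) ⟨t, ht⟩
      let w' : X → K := fun a => if ha : a ∈ Z then w ⟨a, ha⟩ else 0
      have hsum : ∀ t, ∑ a, w' a * u t a = ∑ a : Z, w a * u t a := by
        intro t
        rw [← Finset.sum_subset (Finset.subset_univ Z), ← Finset.sum_coe_sort]
        · refine Finset.sum_congr rfl fun a _ => ?_
          simp [w']
        · intro a _ ha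
          simp [w', ha]
      obtain ⟨b, hb⟩ : ∃ b, w b ≠ 0 := by
        by_contra hcon
        push Not at hcon
        exact hw0 (funext hcon)
      have hbZ := Finset.mem_filter.1 b.2
      refine ⟨h + w', ?_, ?_⟩
      · intro t ht
        simp only [Pi.add_apply, add_mul, Finset.sum_add_distrib]
        rw [h1 t ht, hsum, hwL t ht, add_zero]
      · have hsub : insert b.1 {a ∈ S | h a ≠ 0} ⊆ {a ∈ S | (h + w') a ≠ 0} := by
          intro a ha
          rcases Finset.mem_insert.1 ha with rfl | ha
          · have : h b.1 = 0 := by simpa using hbZ.2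
            simp [w', this, hbZ.1, hb]
          · have ha' := Finset.mem_filter.1 ha
            have : a ∉ Z := by
              intro hz
              exact (Finset.mem_filter.1 hz).2 ha'.2
            simp [w', this, ha'.1, ha'.2]
        have := Finset.card_le_card hsub
        rw [Finset.card_insert_of_notMem] at this
        · omega
        · simpa using fun _ => by simpa using hbZ.2
  by_cases hST : #T ≤ #S
  · obtain ⟨h, h1, h2⟩ := key (#S - #T) (by omega)
    exact ⟨h, h1, by omega⟩
  · exact ⟨0, by simp, by simp; omega⟩

open Classical in
theorem partition_rank {K X τ : Type*} [Field K] [Fintype X] (k : ℕ) :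
    ∀ (c : X → K) (T : Finset τ) (F : τ → (Fin (k+1) → X) → K), (∀ t ∈ T, Red (F t)) →
    (∀ x : Fin (k+1) → X, ∑ t ∈ T, F t x = if ∀ i, x i = x 0 then c (x 0) else 0) →
    #{a | c a ≠ 0} ≤ #T := by
  rcases isEmpty_or_nonempty X with hX | hX
  · intro c T F _ _
    simp [Finset.univ_eq_empty]
  induction k with
  | zero =>
    intro c T F hT hF
    have hTe : T = ∅ := by
      rw [Finset.eq_empty_iff_forall_notMem]
      intro t ht
      obtain ⟨B, f, g, ⟨i, hi⟩, ⟨j, hj⟩, -⟩ := hT t ht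
      exact hj ((Subsingleton.elim (α := Fin 1) i j) ▸ hi)
    subst hTe
    simp only [Finset.card_empty, Nat.le_zero, Finset.card_eq_zero]
    ext a
    have := hF (fun _ => a)
    simpa using this.symm
  | succ k ih =>
    intro c T F hT hF
    let P : τ → Prop := fun t => ∃ u : X → K, ∀ h : X → K, ∑ a, h a * u a = 0 →
      ∀ x : Fin (k+1) → X, ∑ a, h a * F t (Fin.cons a x) = 0
    have hu : ∀ t, ∃ u : X → K, P t → ∀ h : X → K, ∑ a, h a * u a = 0 →
      ∀ x : Fin (k+1) → X, ∑ a, h a * F t (Fin.cons a x) = 0 := by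
      intro t
      by_cases ht : P t
      · obtain ⟨u, hu⟩ := ht
        exact ⟨u, fun _ => hu⟩
      · exact ⟨0, fun h => absurd h ht⟩
    choose u hu using hu
    obtain ⟨h, hh, hcard⟩ := exists_annihilator (univ.filter fun a => c a ≠ 0) (T.filter P) u
    have hsplit := Finset.card_filter_add_card_filter_not (s := T) P
    have := ih (fun a => h a * c a) (T.filter fun t => ¬ P t)
      (fun t x => ∑ a, h a * F t (Fin.cons a x)) ?_ ?_
    · have h3 : (univ.filter fun a => h a * c a ≠ 0) =
          (univ.filter fun a => c a ≠ 0).filter fun a => h a ≠ 0 := by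
        ext a; simp [and_comm]
      rw [h3] at this
      omega
    · intro t ht
      rw [Finset.mem_filter] at ht
      rcases (hT t ht.1).slice_or with h' | h'
      · exact absurd h' ht.2
      · exact h' h
    · intro x
      have h1 : ∑ t ∈ T.filter P, ∑ a, h a * F t (Fin.cons a x) = 0 :=
        Finset.sum_eq_zero fun t ht =>
          hu t (Finset.mem_filter.1 ht).2 h (hh t ht) x
      have h2 := Finset.sum_filter_add_sum_filter_not T P
        (fun t => ∑ a, h a * F t (Fin.cons a x))
      rw [h1, zero_add] at h2
      rw [h2, Finset.sum_comm]
      simp only [← Finset.mul_sum, hF]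
      have h4 : ∀ a, (∀ i, (Fin.cons a x : Fin (k+2) → X) i = a) ↔
          (a = x 0 ∧ ∀ i, x i = x 0) := by
        intro a
        rw [Fin.forall_fin_succ]
        simp only [Fin.cons_zero, Fin.cons_succ, true_and]
        constructor
        · intro hx
          exact ⟨(hx 0).symm, fun i => (hx i).trans (hx 0).symm⟩
        · rintro ⟨rfl, hx⟩
          exact hx
      simp only [Fin.cons_zero, h4]
      by_cases hx : ∀ i, x i = x 0
      · simp [hx]
      · simp [hx]

open Classical in
theorem partition_rank_zmod {K X τ : Type*} [Field K] [Fintype X] (p : ℕ) (hp : p.Prime)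
    (T : Finset τ) (F : τ → (ZMod p → X) → K) (hT : ∀ t ∈ T, Red (F t))
    (hF : ∀ x : ZMod p → X, ∑ t ∈ T, F t x = if ∀ i j, x i = x j then 1 else 0) :
    Fintype.card X ≤ #T := by
  obtain ⟨k, rfl⟩ : ∃ k, p = k + 1 := ⟨p - 1, by have := hp.pos; omega⟩
  have := partition_rank (X := X) (K := K) k (fun _ => 1) T F hT (fun x => by
    rw [hF x]
    congr 1
    apply propext
    exact ⟨fun h i => h i _, fun h i j => (h i).trans (h j).symm⟩)
  simpa using this

/-- The permutation has at least three orbits. -/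
def ThreeOrbits {ι : Type*} (σ : Equiv.Perm ι) : Prop :=
  ∃ a b c, ¬ σ.SameCycle a b ∧ ¬ σ.SameCycle a c ∧ ¬ σ.SameCycle b c

theorem ThreeOrbits.conj {ι : Type*} {σ : Equiv.Perm ι} (h : ThreeOrbits σ) (τ : Equiv.Perm ι) :
    ThreeOrbits (τ * σ * τ⁻¹) := by
  obtain ⟨a, b, c, h1, h2, h3⟩ := h
  refine ⟨τ a, τ b, τ c, ?_, ?_, ?_⟩ <;> rw [Equiv.Perm.sameCycle_conj] <;> simpa

theorem commute_threeOrbits {p : ℕ} [Fact p.Prime] {σ : Equiv.Perm (ZMod p)}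
    (h : ThreeOrbits σ) (hc : ∀ i, σ (i + 1) = σ i + 1) : σ = 1 := by
  have h1 : ∀ m : ℕ, σ (m : ZMod p) = m + σ 0 := by
    intro m
    induction m with
    | zero => simp
    | succ m ih => push_cast; rw [hc, ih]; ring
  have h2 : ∀ i, σ i = i + σ 0 := by
    intro i
    have := h1 i.val
    simpa using this
  by_cases hd : σ 0 = 0
  · ext i; rw [h2]; simp [hd]
  · exfalso
    obtain ⟨a, b, c, hab, -⟩ := h
    apply hab
    have h3 : ∀ m : ℕ, (σ ^ m) a = a + m * σ 0 := by
      intro m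
      induction m with
      | zero => simp
      | succ m ih => rw [pow_succ', Equiv.Perm.mul_apply, ih, h2]; push_cast; ring
    refine ⟨(((b - a) / σ 0).val : ℤ), ?_⟩
    rw [zpow_natCast, h3]
    simp only [ZMod.natCast_val, ZMod.cast_id', id_eq]
    field_simp
    ring

theorem threeOrbits_one {p : ℕ} [Fact p.Prime] (hodd : Odd p) :
    ThreeOrbits (1 : Equiv.Perm (ZMod p)) := by
  have : 2 < Fintype.card (ZMod p) := by
    rw [ZMod.card]
    have := (Fact.out : p.Prime).two_le
    rcases hodd with ⟨k, rfl⟩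
    omega
  obtain ⟨a, b, c, h1, h2, h3⟩ := Fintype.two_lt_card_iff.1 this
  exact ⟨a, b, c, by simpa, by simpa, by simpa⟩

open Classical in
theorem card_threeOrbits {p : ℕ} [Fact p.Prime] (hodd : Odd p) (ε : ℤˣ) :
    (#{σ : Equiv.Perm (ZMod p) | ThreeOrbits σ ∧ Equiv.Perm.sign σ = ε} : ZMod p) =
      if ε = 1 then 1 else 0 := by
  let α := {σ : Equiv.Perm (ZMod p) // ThreeOrbits σ ∧ Equiv.Perm.sign σ = ε}
  let c : Equiv.Perm (ZMod p) := Equiv.addRight 1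
  let f : Function.End α := fun σ => ⟨c * σ.1 * c⁻¹, σ.2.1.conj c, by
    have := σ.2.2
    rw [Equiv.Perm.sign_mul, Equiv.Perm.sign_mul, this, Equiv.Perm.sign_inv, mul_comm, ← mul_assoc,
      Int.units_mul_self, one_mul]⟩
  have hf : ∀ (m : ℕ) (σ : α), ((f ^ m) σ).1 = c ^ m * σ.1 * (c ^ m)⁻¹ := by
    intro m
    induction m with
    | zero => intro σ; simp; rfl
    | succ m ih =>
      intro σ
      have : ((f ^ (m + 1)) σ).1 = c * ((f ^ m) σ).1 * c⁻¹ := by rw [pow_succ']; rfl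
      rw [this, ih, pow_succ']
      group
  have hcp : c ^ p = 1 := by
    have : ∀ (m : ℕ) i, (c ^ m) i = i + m := by
      intro m
      induction m with
      | zero => simp
      | succ m ih => intro i; rw [pow_succ', Equiv.Perm.mul_apply, ih]; simp [c]; ring
    ext i
    simp [this]
  have hfp : f ^ p ^ 1 = 1 := by
    funext σ
    apply Subtype.ext
    rw [pow_one, hf, hcp]
    simp
    rfl
  have key := Equiv.Perm.card_fixedPoints_modEq (p := p) hfp
  have hfix : ∀ σ : α, σ ∈ Function.fixedPoints f ↔ σ.1 = 1 := by
    intro σ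
    constructor
    · intro h
      have h' : c * σ.1 * c⁻¹ = σ.1 := congrArg Subtype.val h
      have h'' : c * σ.1 = σ.1 * c := by
        conv_rhs => rw [← h']
        group
      apply commute_threeOrbits σ.2.1
      intro i
      have := congrArg (fun τ : Equiv.Perm (ZMod p) => τ i) h''
      simpa [c] using this.symm
    · intro h
      apply Subtype.ext
      change c * σ.1 * c⁻¹ = σ.1
      rw [h]; simp
  rw [← ZMod.natCast_eq_natCast_iff] at key
  rw [← Fintype.card_subtype, key]
  by_cases hε : ε = 1
  · subst hε
    have : Fintype.card (Function.fixedPoints f) = 1 := by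
      rw [Fintype.card_eq_one_iff]
      refine ⟨⟨⟨1, threeOrbits_one hodd, by simp⟩, (hfix _).2 rfl⟩, ?_⟩
      rintro ⟨y, hy⟩
      apply Subtype.ext
      apply Subtype.ext
      exact (hfix _).1 hy
    simp [this]
  · have : Fintype.card (Function.fixedPoints f) = 0 := by
      rw [Fintype.card_eq_zero_iff]
      constructor
      rintro ⟨y, hy⟩
      have h1 := (hfix _).1 hy
      have h2 := y.2.2
      rw [h1] at h2
      simp at h2
      exact hε h2.symm
    simp [this, hε]

open Classical in
theorem sum_sign_threeOrbits {p : ℕ} [Fact p.Prime] (hodd : Odd p) :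
    ∑ σ : Equiv.Perm (ZMod p) with ThreeOrbits σ, ((Equiv.Perm.sign σ : ℤ) : ZMod p) = 1 := by
  have h : ∀ σ : Equiv.Perm (ZMod p), ((Equiv.Perm.sign σ : ℤ) : ZMod p) =
      (if Equiv.Perm.sign σ = 1 then 1 else 0) - (if Equiv.Perm.sign σ = -1 then 1 else 0) := by
    intro σ
    rcases Int.units_eq_one_or (Equiv.Perm.sign σ) with h | h <;> rw [h] <;> simp
  simp only [h, Finset.sum_sub_distrib, Finset.sum_boole, Finset.filter_filter]
  rw [card_threeOrbits hodd, card_threeOrbits hodd]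
  simp

/-- Exponent vectors of low degree. -/
def lowE (p n : ℕ) : Finset (Fin n → Fin p) := {e | 3 * ∑ l, (e l : ℕ) ≤ n * (p - 1)}

theorem lowE_le (p n : ℕ) (hp : 0 < p) (hn : 1 ≤ n) : (#(lowE p n) : ℝ) ≤ EGconst p ^ n := by
  have key : (#(lowE p n) : ℝ) ^ ((n : ℝ)⁻¹) ≤ EGconst p := by
    apply le_csInf
    · exact ⟨_, 1/2, by norm_num, by norm_num, rfl⟩
    · rintro y ⟨x, hx0, hx1, rfl⟩
      have hgeom : (1 - x ^ p) / (1 - x) = ∑ j : Fin p, x ^ (j : ℕ) := by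
        rw [Fin.sum_univ_eq_sum_range (fun j => x ^ j), geom_sum_eq hx1.ne, ← neg_div_neg_eq]
        simp
      have hy : 0 ≤ (1 - x ^ p) / (1 - x) * x ^ (-(((p : ℝ) - 1) / 3)) := by
        rw [hgeom]; positivity
      rw [Real.rpow_inv_le_iff_of_pos (by positivity) hy (by exact_mod_cast hn),
        Real.rpow_natCast, mul_pow, hgeom, ← Real.rpow_natCast (x ^ (_ : ℝ)), ← Real.rpow_mul hx0.le]
      have h1 : (∑ j : Fin p, x ^ (j : ℕ)) ^ n = ∑ e : Fin n → Fin p, x ^ (∑ l, (e l : ℕ)) := by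
        have := Finset.prod_univ_sum (fun _ : Fin n => (univ : Finset (Fin p)))
          (fun _ j => x ^ (j : ℕ))
        simp only [Finset.prod_const, Finset.card_univ, Fintype.card_fin,
          Fintype.piFinset_univ] at this
        rw [this]
        simp [Finset.prod_pow_eq_pow_sum]
      rw [h1]
      have h2 : ∀ e ∈ lowE p n, x ^ ((n : ℝ) * ((p : ℝ) - 1) / 3) ≤ x ^ (∑ l, (e l : ℕ)) := by
        intro e he
        rw [← Real.rpow_natCast]
        apply Real.rpow_le_rpow_of_exponent_ge hx0 hx1.le
        have := (Finset.mem_filter.1 he).2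
        have h3 : (3 : ℝ) * ((∑ l, (e l : ℕ) : ℕ) : ℝ) ≤ n * ((p - 1 : ℕ) : ℝ) := by
          exact_mod_cast this
        rw [Nat.cast_sub hp] at h3
        push_cast at h3 ⊢
        linarith
      have h3 : #(lowE p n) * x ^ ((n : ℝ) * ((p : ℝ) - 1) / 3) ≤
          ∑ e : Fin n → Fin p, x ^ (∑ l, (e l : ℕ)) := by
        calc _ = ∑ e ∈ lowE p n, x ^ ((n : ℝ) * ((p : ℝ) - 1) / 3) := by simp
          _ ≤ ∑ e ∈ lowE p n, x ^ (∑ l, (e l : ℕ)) := Finset.sum_le_sum h2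
          _ ≤ _ := Finset.sum_le_sum_of_subset_of_nonneg (Finset.subset_univ _)
            (fun _ _ _ => by positivity)
      have h4 : x ^ (-(((p : ℝ) - 1) / 3) * n) = (x ^ ((n : ℝ) * ((p : ℝ) - 1) / 3))⁻¹ := by
        rw [← Real.rpow_neg hx0.le]
        congr 1
        ring
      rw [h4, ← div_eq_mul_inv, le_div_iff₀ (by positivity)]
      exact h3
  calc (#(lowE p n) : ℝ) = ((#(lowE p n) : ℝ) ^ ((n : ℝ)⁻¹)) ^ n := by
        rw [← Real.rpow_natCast, ← Real.rpow_mul (by positivity), inv_mul_cancel₀, Real.rpow_one]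
        positivity
    _ ≤ _ := by gcongr

theorem lowE_pos (p n : ℕ) (hp : 0 < p) : 1 ≤ #(lowE p n) := by
  rw [Nat.one_le_iff_ne_zero, ← Nat.pos_iff_ne_zero, Finset.card_pos]
  exact ⟨fun _ => ⟨0, hp⟩, by simp [lowE]⟩

section rank
open Classical

variable {p n : ℕ} {X : Type}

/-- The fixed factor attached to a block and an exponent vector. -/
noncomputable def blockF (v : X → Fin n → ZMod p) (t : Finset (ZMod p) × (Fin n → Fin p))
    (x : ZMod p → X) : ZMod p :=
  if h : t.1.Nonempty then
    if ∀ i ∈ t.1, x i = x h.choose then ∏ l, v (x h.choose) l ^ (t.2 l : ℕ) else 0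
  else 0

theorem blockF_dependsOn (v : X → Fin n → ZMod p) (t : Finset (ZMod p) × (Fin n → Fin p)) :
    DependsOn (blockF v t) (t.1 : Set (ZMod p)) := by
  intro x y hxy
  unfold blockF
  by_cases h : t.1.Nonempty
  · simp only [h, dif_pos]
    rw [hxy _ h.choose_spec]
    have : (∀ i ∈ t.1, x i = y h.choose) ↔ (∀ i ∈ t.1, y i = y h.choose) :=
      forall₂_congr fun i hi => by rw [hxy i hi]
    simp only [this]
  · simp [h]

/-- The index set of the decomposition. -/
noncomputable def idx (p n : ℕ) [NeZero p] : Finset (Finset (ZMod p) × (Fin n → Fin p)) :=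
  (univ.filter fun B : Finset (ZMod p) => B.Nonempty ∧ Bᶜ.Nonempty) ×ˢ lowE p n

/-- Functions decomposing over the index set. -/
def InW [NeZero p] (v : X → Fin n → ZMod p) (Φ : (ZMod p → X) → ZMod p) : Prop :=
  ∃ g : Finset (ZMod p) × (Fin n → Fin p) → (ZMod p → X) → ZMod p,
    (∀ t, DependsOn (g t) ((t.1 : Set (ZMod p))ᶜ)) ∧
    ∀ x, Φ x = ∑ t ∈ idx p n, blockF v t x * g t x

theorem InW.zero [NeZero p] (v : X → Fin n → ZMod p) : InW v (fun _ => 0) :=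
  ⟨fun _ _ => 0, fun _ _ _ _ => rfl, by simp⟩

theorem InW.add [NeZero p] {v : X → Fin n → ZMod p} {Φ Ψ : (ZMod p → X) → ZMod p}
    (h1 : InW v Φ) (h2 : InW v Ψ) : InW v (fun x => Φ x + Ψ x) := by
  obtain ⟨g, hg, hg'⟩ := h1
  obtain ⟨h, hh, hh'⟩ := h2
  refine ⟨fun t x => g t x + h t x, fun t x y hxy => ?_, fun x => ?_⟩
  · change g t x + h t x = g t y + h t y
    rw [hg t hxy, hh t hxy]
  · change Φ x + Ψ x = ∑ t ∈ idx p n, blockF v t x * (g t x + h t x)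
    rw [hg', hh', ← Finset.sum_add_distrib]
    simp only [mul_add]

theorem InW.sum [NeZero p] {v : X → Fin n → ZMod p} {τ : Type*} (s : Finset τ)
    (Φ : τ → (ZMod p → X) → ZMod p) (h : ∀ j ∈ s, InW v (Φ j)) :
    InW v (fun x => ∑ j ∈ s, Φ j x) := by
  induction s using Finset.induction_on with
  | empty => simpa using InW.zero v
  | insert a s ha ih =>
    simp only [Finset.sum_insert ha]
    exact (h a (by simp)).add (ih fun j hj => h j (by simp [hj]))

theorem const_on_cycle {ι : Type*} {σ : Equiv.Perm ι} {Y : Type*} {x : ι → Y}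
    (hx : ∀ i, x (σ i) = x i) {a b : ι} (h : σ.SameCycle a b) : x a = x b := by
  obtain ⟨m, rfl⟩ := h
  have hinv : ∀ i, x (σ⁻¹ i) = x i := fun i => by
    have := hx (σ⁻¹ i)
    simpa using this.symm
  induction m using Int.induction_on with
  | zero => simp
  | succ m ih => rw [add_comm, zpow_add, zpow_one, Equiv.Perm.mul_apply, hx]; exact ih
  | pred m ih =>
    rw [sub_eq_add_neg, add_comm, zpow_add, zpow_neg, zpow_one, Equiv.Perm.mul_apply, hinv]
    exact ih

theorem exists_low_orbit [NeZero p] {σ : Equiv.Perm (ZMod p)} (hσ : ThreeOrbits σ)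
    (m : Fin n → ZMod p → ℕ) (hm : ∀ l, ∑ i, m l i ≤ p - 1) :
    ∃ a b, ¬ σ.SameCycle a b ∧
      3 * ∑ l, ∑ i with σ.SameCycle a i, m l i ≤ n * (p - 1) := by
  obtain ⟨a, b, c, hab, hac, hbc⟩ := hσ
  let O : ZMod p → Finset (ZMod p) := fun a => {i | σ.SameCycle a i}
  have hdisj : ∀ a b, ¬ σ.SameCycle a b → Disjoint (O a) (O b) := by
    intro a b h
    rw [Finset.disjoint_left]
    intro i hi hj
    simp only [O, Finset.mem_filter, Finset.mem_univ, true_and] at hi hj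
    exact h (hi.trans hj.symm)
  have h1 : ∀ l, ∑ i ∈ O a, m l i + ∑ i ∈ O b, m l i + ∑ i ∈ O c, m l i ≤ p - 1 := by
    intro l
    rw [← Finset.sum_union (hdisj a b hab), ← Finset.sum_union]
    · exact (Finset.sum_le_sum_of_subset (Finset.subset_univ _)).trans (hm l)
    · rw [Finset.disjoint_union_left]
      exact ⟨hdisj a c hac, hdisj b c hbc⟩
  have h2 : ∑ l, ∑ i ∈ O a, m l i + ∑ l, ∑ i ∈ O b, m l i + ∑ l, ∑ i ∈ O c, m l i
      ≤ n * (p - 1) := by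
    rw [← Finset.sum_add_distrib, ← Finset.sum_add_distrib]
    refine (Finset.sum_le_sum fun l _ => h1 l).trans ?_
    simp
  by_cases ha : 3 * ∑ l, ∑ i ∈ O a, m l i ≤ n * (p - 1)
  · exact ⟨a, b, hab, ha⟩
  by_cases hb : 3 * ∑ l, ∑ i ∈ O b, m l i ≤ n * (p - 1)
  · exact ⟨b, c, hbc, hb⟩
  · exact ⟨c, a, fun h => hac h.symm, by change 3 * ∑ l, ∑ i ∈ O c, m l i ≤ _; omega⟩

theorem InW.mono [NeZero p] (v : X → Fin n → ZMod p) {σ : Equiv.Perm (ZMod p)}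
    (hσ : ThreeOrbits σ) (m : Fin n → ZMod p → ℕ) (hm : ∀ l, ∑ i, m l i ≤ p - 1) (r : ZMod p) :
    InW v (fun x => r * (if ∀ i, x (σ i) = x i then 1 else 0) *
      ∏ l, ∏ i, v (x i) l ^ m l i) := by
  obtain ⟨a, b, hab, hlow⟩ := exists_low_orbit hσ m hm
  set B : Finset (ZMod p) := {i | σ.SameCycle a i} with hB
  have hBmem : ∀ i, i ∈ B ↔ σ.SameCycle a i := by simp [hB]
  have hBσ : ∀ i, σ i ∈ B ↔ i ∈ B := by
    intro i
    rw [hBmem, hBmem, Equiv.Perm.sameCycle_apply_right]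
  have haB : a ∈ B := by rw [hBmem]
  have hBne : B.Nonempty := ⟨a, haB⟩
  have hbB : b ∉ B := by rwa [hBmem]
  have hp : 0 < p := Nat.pos_of_ne_zero (NeZero.ne p)
  let e : Fin n → Fin p := fun l => ⟨∑ i ∈ B, m l i, by
    have := (Finset.sum_le_sum_of_subset (f := m l) (Finset.subset_univ B)).trans (hm l)
    omega⟩
  let g0 : (ZMod p → X) → ZMod p := fun x =>
    r * (if ∀ i ∉ B, x (σ i) = x i then 1 else 0) * ∏ l, ∏ i ∈ Bᶜ, v (x i) l ^ m l i
  have hg0 : DependsOn g0 ((B : Set (ZMod p))ᶜ) := by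
    intro x y hxy
    have h1 : (∀ i ∉ B, x (σ i) = x i) ↔ (∀ i ∉ B, y (σ i) = y i) := by
      refine forall₂_congr fun i hi => ?_
      rw [hxy i (by simpa using hi), hxy (σ i) (by simpa [hBσ] using hi)]
    have h2 : ∏ l, ∏ i ∈ Bᶜ, v (x i) l ^ m l i = ∏ l, ∏ i ∈ Bᶜ, v (y i) l ^ m l i := by
      refine Finset.prod_congr rfl fun l _ => Finset.prod_congr rfl fun i hi => ?_
      rw [hxy i (by simpa using hi)]
    simp only [g0, h1, h2]
  refine ⟨fun t => if t = (B, e) then g0 else fun _ => 0, ?_, ?_⟩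
  · intro t
    by_cases ht : t = (B, e)
    · subst ht; simpa using hg0
    · simp only [ht, if_false]; intro _ _ _; rfl
  · intro x
    have hmem : (B, e) ∈ idx p n := by
      simp only [idx, Finset.mem_product, Finset.mem_filter, Finset.mem_univ, true_and, lowE]
      exact ⟨⟨hBne, ⟨b, by simpa using hbB⟩⟩, hlow⟩
    rw [Finset.sum_eq_single_of_mem _ hmem (by intro t _ ht; simp [ht])]
    simp only [if_true, blockF, hBne, dif_pos]
    set a0 := hBne.choose with ha0
    have ha0B : a0 ∈ B := hBne.choose_spec
    by_cases hx : ∀ i, x (σ i) = x i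
    · have hc : ∀ i ∈ B, x i = x a0 := by
        intro i hi
        exact const_on_cycle hx (((hBmem i).1 hi).symm.trans ((hBmem a0).1 ha0B))
      rw [if_pos hx, if_pos hc]
      simp only [g0]
      rw [if_pos fun i _ => hx i]
      have : ∏ l, ∏ i, v (x i) l ^ m l i =
          (∏ l, v (x a0) l ^ (e l : ℕ)) * ∏ l, ∏ i ∈ Bᶜ, v (x i) l ^ m l i := by
        rw [← Finset.prod_mul_distrib]
        refine Finset.prod_congr rfl fun l _ => ?_
        rw [← Finset.prod_mul_prod_compl B]
        congr 1
        rw [← Finset.prod_pow_eq_pow_sum]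
        exact Finset.prod_congr rfl fun i hi => by rw [hc i hi]
      rw [this]
      ring
    · rw [if_neg hx]
      by_cases hc : ∀ i ∈ B, x i = x a0
      · have : ¬ ∀ i ∉ B, x (σ i) = x i := by
          intro h
          apply hx
          intro i
          by_cases hi : i ∈ B
          · rw [hc i hi, hc (σ i) ((hBσ i).2 hi)]
          · exact h i hi
        simp only [g0]
        rw [if_neg this]
        simp
      · rw [if_neg hc]
        simp

theorem expand_one [Fact p.Prime] : ∃ (M : Finset (ZMod p → ℕ)) (c : (ZMod p → ℕ) → ZMod p),
    (∀ m ∈ M, ∑ i, m i ≤ p - 1) ∧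
    ∀ z : ZMod p → ZMod p, (if ∑ i, z i = 0 then 1 else 0) = ∑ m ∈ M, c m * ∏ i, z i ^ m i := by
  have hp := (Fact.out : p.Prime).two_le
  have h0 : (0 : ZMod p → ℕ) ∉ (univ : Finset (ZMod p)).piAntidiag (p - 1) := by
    simp only [Finset.mem_piAntidiag]
    simp
    omega
  refine ⟨insert 0 (univ.piAntidiag (p - 1)),
    fun m => if m = 0 then 1 else - (Nat.multinomial univ m : ZMod p), ?_, ?_⟩
  · intro m hm
    rcases Finset.mem_insert.1 hm with rfl | hm
    · simp
    · exact (Finset.mem_piAntidiag.1 hm).1.le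
  · intro z
    have h1 : (if ∑ i, z i = 0 then (1 : ZMod p) else 0) = 1 - (∑ i, z i) ^ (p - 1) := by
      split_ifs with h
      · rw [h, zero_pow (by omega), sub_zero]
      · rw [ZMod.pow_card_sub_one_eq_one h, sub_self]
    rw [h1, Finset.sum_pow_eq_sum_piAntidiag, Finset.sum_insert h0, sub_eq_add_neg,
      ← Finset.sum_neg_distrib]
    congr 1
    · simp
    · refine Finset.sum_congr rfl fun m hm => ?_
      have : m ≠ 0 := fun h => h0 (h ▸ hm)
      simp [this]

theorem InW.perm [Fact p.Prime] (v : X → Fin n → ZMod p) {σ : Equiv.Perm (ZMod p)}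
    (hσ : ThreeOrbits σ) (r : ZMod p) :
    InW v (fun x => r * (if ∀ i, x (σ i) = x i then 1 else 0) *
      (if ∑ i, v (x i) = 0 then 1 else 0)) := by
  obtain ⟨M, c, hM, hexp⟩ := expand_one (p := p)
  have h1 : ∀ x : ZMod p → X, r * (if ∀ i, x (σ i) = x i then 1 else 0) *
      (if ∑ i, v (x i) = 0 then 1 else 0) =
      ∑ m ∈ Fintype.piFinset (fun _ : Fin n => M),
        (r * ∏ l, c (m l)) * (if ∀ i, x (σ i) = x i then 1 else 0) *
          ∏ l, ∏ i, v (x i) l ^ m l i := by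
    intro x
    have h2 : (if ∑ i, v (x i) = 0 then (1 : ZMod p) else 0) =
        ∏ l, (if ∑ i, v (x i) l = 0 then (1 : ZMod p) else 0) := by
      rw [Finset.prod_ite_zero]
      simp only [Finset.prod_const_one]
      congr 1
      apply propext
      constructor
      · intro h l _
        have := congrFun h l
        simpa using this
      · intro h
        ext l
        simpa using h l (Finset.mem_univ l)
    rw [h2]
    simp only [hexp]
    rw [Finset.prod_univ_sum, Finset.mul_sum]
    refine Finset.sum_congr rfl fun m _ => ?_
    rw [Finset.prod_mul_distrib]
    ring
  simp only [h1]
  refine InW.sum _ _ fun m hm => InW.mono v hσ m (fun l => hM _ (Fintype.mem_piFinset.1 hm l)) _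

theorem sum_sign_all [Fact p.Prime] (x : ZMod p → X) (hx : ¬ Function.Injective x) :
    ∑ σ : Equiv.Perm (ZMod p), ((Equiv.Perm.sign σ : ℤ) : ZMod p) *
      (if ∀ i, x (σ i) = x i then 1 else 0) = 0 := by
  have : ∃ i j, x i = x j ∧ i ≠ j := by
    simpa [Function.Injective] using hx
  obtain ⟨i, j, hij, hne⟩ := this
  let M : Matrix (ZMod p) (ZMod p) (ZMod p) := fun a b => if x a = x b then 1 else 0
  have hdet : M.det = 0 := Matrix.det_zero_of_row_eq hne (by ext b; simp [M, hij])
  rw [Matrix.det_apply'] at hdet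
  refine Eq.trans ?_ hdet
  refine Finset.sum_congr rfl fun σ _ => ?_
  congr 1
  simp only [M]
  rw [Finset.prod_ite_zero]
  simp

theorem two_values [Fact p.Prime] {v : X → Fin n → ZMod p} (hv : Function.Injective v)
    {σ : Equiv.Perm (ZMod p)} (hσ : ¬ ThreeOrbits σ) {x : ZMod p → X}
    (hx : ∀ i, x (σ i) = x i) (h0 : ∑ i, v (x i) = 0) : ∀ i j, x i = x j := by
  intro i j
  by_contra hij
  have h2 : ∀ k, x k ≠ x i → x k = x j := by
    intro k hk
    by_contra hkj
    exact hσ ⟨i, j, k, fun h => hij (const_on_cycle hx h),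
      fun h => hk (const_on_cycle hx h).symm, fun h => hkj (const_on_cycle hx h).symm⟩
  set s : Finset (ZMod p) := {k | x k = x i} with hs
  have hi : i ∈ s := by simp [hs]
  have hj : j ∉ s := by simpa [hs] using fun h => hij h.symm
  have hcard : #s < p := by
    have : #s < #(univ : Finset (ZMod p)) :=
      Finset.card_lt_card (Finset.ssubset_univ_iff.2 fun h => hj (h ▸ Finset.mem_univ j))
    rwa [Finset.card_univ, ZMod.card] at this
  have hpos : 0 < #s := Finset.card_pos.2 ⟨i, hi⟩
  have hne : (#s : ZMod p) ≠ 0 := by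
    rw [Ne, ZMod.natCast_eq_zero_iff]
    exact Nat.not_dvd_of_pos_of_lt hpos hcard
  apply hij
  apply hv
  have h3 : ∑ k, (v (x k) - v (x j)) = 0 := by
    rw [Finset.sum_sub_distrib, h0]
    ext l
    simp
  have h4 : ∑ k, (v (x k) - v (x j)) = #s • (v (x i) - v (x j)) := by
    rw [← Finset.sum_subset (Finset.subset_univ s), ← Finset.sum_const]
    · refine Finset.sum_congr rfl fun k hk => ?_
      rw [(Finset.mem_filter.1 hk).2]
    · intro k _ hk
      rw [h2 k (by simpa [hs] using hk), sub_self]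
  rw [h4] at h3
  ext l
  have h5 := congrFun h3 l
  simp only [Pi.smul_apply, Pi.sub_apply, Pi.zero_apply, nsmul_eq_mul] at h5
  exact sub_eq_zero.1 ((mul_eq_zero.1 h5).resolve_left hne)

theorem diag_eval [Fact p.Prime] (hodd : Odd p) {v : X → Fin n → ZMod p}
    (hv : Function.Injective v)
    (hX : ∀ x : ZMod p → X, Function.Injective x → ∑ i, v (x i) ≠ 0) (x : ZMod p → X) :
    ∑ σ : Equiv.Perm (ZMod p) with ThreeOrbits σ, ((Equiv.Perm.sign σ : ℤ) : ZMod p) *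
      (if ∀ i, x (σ i) = x i then 1 else 0) * (if ∑ i, v (x i) = 0 then 1 else 0) =
    if ∀ i j, x i = x j then 1 else 0 := by
  by_cases hc : ∀ i j, x i = x j
  · have h0 : ∑ i, v (x i) = 0 := by
      rw [Finset.sum_congr rfl fun i _ => by rw [hc i 0]]
      ext l
      simp
    rw [if_pos hc, if_pos h0]
    simp only [mul_one]
    refine Eq.trans ?_ (sum_sign_threeOrbits hodd)
    refine Finset.sum_congr rfl fun σ _ => ?_
    rw [if_pos fun i => hc _ _, mul_one]
  · rw [if_neg hc]
    by_cases h0 : ∑ i, v (x i) = 0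
    · simp only [h0, if_true, mul_one]
      refine Eq.trans ?_ (sum_sign_all x fun h => hX x h h0)
      refine Finset.sum_subset (Finset.subset_univ _) fun σ _ hσ => ?_
      have hσ' : ¬ ThreeOrbits σ := by simpa using hσ
      rw [if_neg fun hx => hc (two_values hv hσ' hx h0), mul_zero]
    · simp [h0]

theorem rank_bound (p n : ℕ) [Fact p.Prime] (hodd : Odd p) (X : Type) [Fintype X]
    (v : X → Fin n → ZMod p) (hv : Function.Injective v)
    (hX : ∀ x : ZMod p → X, Function.Injective x → ∑ i, v (x i) ≠ 0) :
    Fintype.card X ≤ (2 ^ p - 1) * #(lowE p n) := by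
  have hW : InW v (fun x => ∑ σ : Equiv.Perm (ZMod p) with ThreeOrbits σ,
      ((Equiv.Perm.sign σ : ℤ) : ZMod p) * (if ∀ i, x (σ i) = x i then 1 else 0) *
        (if ∑ i, v (x i) = 0 then 1 else 0)) :=
    InW.sum _ _ fun σ hσ => InW.perm v (Finset.mem_filter.1 hσ).2 _
  obtain ⟨g, hg, hgx⟩ := hW
  have h1 : Fintype.card X ≤ #(idx p n) := by
    apply partition_rank_zmod p Fact.out (idx p n) (fun t x => blockF v t x * g t x)
    · intro t ht
      have ht' := (Finset.mem_filter.1 (Finset.mem_product.1 ht).1).2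
      refine ⟨(t.1 : Set (ZMod p)), blockF v t, g t, ht'.1, ?_, blockF_dependsOn v t, hg t,
        fun x => rfl⟩
      obtain ⟨b, hb⟩ := ht'.2
      exact ⟨b, by simpa using hb⟩
    · intro x
      rw [← hgx x]
      refine (diag_eval hodd hv hX x).trans ?_
      congr
  refine h1.trans ?_
  rw [idx, Finset.card_product]
  gcongr
  have : #(univ.filter fun B : Finset (ZMod p) => B.Nonempty ∧ Bᶜ.Nonempty) <
      #(univ : Finset (Finset (ZMod p))) := by
    apply Finset.card_lt_card
    rw [Finset.ssubset_univ_iff]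
    intro h
    have := Finset.mem_univ (∅ : Finset (ZMod p))
    rw [← h] at this
    simp at this
  rw [Finset.card_univ, Fintype.card_finset, ZMod.card] at this
  omega

end rank

theorem main_bound (p n : ℕ) [Fact p.Prime] (hodd : Odd p)
    (S : Multiset (Fin n → ZMod p)) (hS : ¬ ∃ T ≤ S, Multiset.card T = p ∧ T.sum = 0) :
    Multiset.card S ≤ (p - 1) * ((2 ^ p - 1) * #(lowE p n)) := by
  classical
  have hcount : ∀ a ∈ S.toFinset, S.count a ≤ p - 1 := by
    intro a _
    by_contra hcon
    apply hS
    refine ⟨Multiset.replicate p a, Multiset.le_count_iff_replicate_le.1 (by omega), by simp, ?_⟩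
    rw [Multiset.sum_replicate]
    ext l
    simp
  have hA : #S.toFinset ≤ (2 ^ p - 1) * #(lowE p n) := by
    rw [← Fintype.card_coe]
    apply rank_bound p n hodd S.toFinset Subtype.val Subtype.val_injective
    intro x hx h0
    apply hS
    refine ⟨univ.val.map (fun i => (x i).1), ?_, ?_, h0⟩
    · rw [Multiset.le_iff_subset]
      · intro a ha
        obtain ⟨i, -, rfl⟩ := Multiset.mem_map.1 ha
        exact Multiset.mem_toFinset.1 (x i).2
      · exact Multiset.Nodup.map (Subtype.val_injective.comp hx) univ.nodup
    · simp [ZMod.card]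
  rw [← Multiset.toFinset_sum_count_eq]
  calc _ ≤ ∑ a ∈ S.toFinset, (p - 1) := Finset.sum_le_sum hcount
    _ = #S.toFinset * (p - 1) := by simp
    _ ≤ _ := by rw [mul_comm]; gcongr

theorem stmt_1 (p n : ℕ) (hp : p.Prime) (hodd : Odd p) (hn : 1 ≤ n) :
    (∀ S : Multiset (Fin n → ZMod p),
      ((p : ℝ) - 1) * 2 ^ p * EGconst p ^ n ≤ (Multiset.card S : ℝ) →
      ∃ T ≤ S, Multiset.card T = p ∧ T.sum = 0) ∧
    (EGZ (Fin n → ZMod p) : ℝ) ≤ ((p : ℝ) - 1) * 2 ^ p * EGconst p ^ n := by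
  have : Fact p.Prime := ⟨hp⟩
  set M := #(lowE p n) with hM
  set N := (p - 1) * ((2 ^ p - 1) * M) + 1 with hN
  have hM1 : 1 ≤ M := lowE_pos p n hp.pos
  have hNle : N ≤ (p - 1) * 2 ^ p * M := by
    obtain ⟨a, ha⟩ : ∃ a, p - 1 = a + 1 := ⟨p - 2, by have := hp.two_le; omega⟩
    obtain ⟨b, hb⟩ : ∃ b, 2 ^ p = b + 1 := ⟨2 ^ p - 1, by have := Nat.one_le_two_pow (n := p); omega⟩
    rw [hN, ha, hb]
    simp only [Nat.add_sub_cancel]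
    nlinarith [Nat.zero_le (a * M)]
  have hreal : (N : ℝ) ≤ ((p : ℝ) - 1) * 2 ^ p * EGconst p ^ n := by
    have h1 : (N : ℝ) ≤ (((p - 1) * 2 ^ p * M : ℕ) : ℝ) := by exact_mod_cast hNle
    push_cast [Nat.cast_sub hp.one_le] at h1
    refine h1.trans ?_
    have hp1 : (1 : ℝ) ≤ p := by exact_mod_cast hp.one_le
    have := lowE_le p n hp.pos hn
    have h0 : (0 : ℝ) ≤ (p : ℝ) - 1 := by linarith
    gcongr
  have hmain : ∀ S : Multiset (Fin n → ZMod p), N ≤ Multiset.card S →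
      ∃ T ≤ S, Multiset.card T = p ∧ T.sum = 0 := by
    intro S hS
    by_contra hcon
    have := main_bound p n hodd S hcon
    rw [← hM] at this
    omega
  refine ⟨fun S hS => hmain S (by exact_mod_cast hreal.trans hS), le_trans ?_ hreal⟩
  have hexp : AddMonoid.exponent (Fin n → ZMod p) = p := by
    have : Nonempty (Fin n) := ⟨⟨0, hn⟩⟩
    rw [AddMonoid.exponent_eq_prime_iff hp]
    intro g hg
    refine addOrderOf_eq_prime ?_ hg
    ext l
    simp
  norm_cast
  apply Nat.sInf_le
  intro S hS
  rw [hexp]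
  exact hmain S hS.ge
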